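/- Assume (W + log P)₊ ∈ L¹(Λ^N; P d^N x) and V_P ≠ ∅. Then there exists U ∈ V_P (with m-sum structure U(x₁,…,x_N) = Σ_{1≤i₁<⋯<i_m≤N} u(x_{i₁},…,x_{i_m}) a.e. for a symmetric real-valued measurable generator u) such that F_P(V) ≤ F_P(U) for every V ∈ V_P. Furthermore, if U₀ and U₁ (with generators u₀ and u₁) are any two maximizers of F_P on V_P (or on V_{ρ^(m)}, if maximizers on V_{ρ^(m)} exist), then there is a real constant C with U₁ − U₀ = C a.e. on Λ^N and u₁ − u₀ = C / C(N,m) a.e. on Λ^m, where C(N,m) is the binomial coefficient N choose m. -/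

import Mathlib

open MeasureTheory Real Filter
open scoped ENNReal

noncomputable section

variable {Λ : Type*} [MeasurableSpace Λ]

/-- The product measure on `Λ^k` (the `k`-fold product of `μ`). -/
def pm (μ : Measure Λ) (k : ℕ) : Measure (Fin k → Λ) := Measure.pi fun _ => μ

/-- A function on `Λ^k` is symmetric if it is invariant under all permutations
of its variables. -/
def IsSymm' {Λ : Type*} (k : ℕ) (f : (Fin k → Λ) → ℝ) : Prop :=
  ∀ σ : Equiv.Perm (Fin k), ∀ x, f (x ∘ σ) = f x

/-- The `m`-sum `Σ_{1 ≤ i₁ < ⋯ < i_m ≤ N} v(x_{i₁},…,x_{i_m})`. -/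
def mSum {Λ : Type*} (N m : ℕ) (v : (Fin m → Λ) → ℝ) (x : Fin N → Λ) : ℝ :=
  ∑ s ∈ Finset.powersetCard m (Finset.univ : Finset (Fin N)),
    if h : s.card = m then v (fun i => x (s.orderEmbOfFin h i)) else 0

/-- `V` has `m`-sum structure with (symmetric, measurable, real-valued) generator `v`. -/
def HasSumStruct (μ : Measure Λ) (N m : ℕ) (V : (Fin N → Λ) → ℝ)
    (v : (Fin m → Λ) → ℝ) : Prop :=
  IsSymm' m v ∧ Measurable v ∧ V =ᵐ[pm μ N] mSum N m v

/-- The measure `P d^N x`. -/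
def Pmeas (μ : Measure Λ) (N : ℕ) (P : (Fin N → Λ) → ℝ) : Measure (Fin N → Λ) :=
  (pm μ N).withDensity fun x => ENNReal.ofReal (P x)

/-- The measure `e^{-W} d^N x`. -/
def Wmeas (μ : Measure Λ) (N : ℕ) (W : (Fin N → Λ) → ℝ) : Measure (Fin N → Λ) :=
  (pm μ N).withDensity fun x => ENNReal.ofReal (Real.exp (-(W x)))

/-- The partition function `Z(V) = ∫ e^{-V-W} d^N x`, as an extended nonnegative real. -/
def ZE (μ : Measure Λ) (N : ℕ) (W V : (Fin N → Λ) → ℝ) : ℝ≥0∞ :=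
  ∫⁻ x, ENNReal.ofReal (Real.exp (-(V x) - W x)) ∂(pm μ N)

/-- The partition function `Z(V)` as a real number. -/
def Zfun (μ : Measure Λ) (N : ℕ) (W V : (Fin N → Λ) → ℝ) : ℝ :=
  (ZE μ N W V).toReal

/-- The functional `F_P(V) = exp(-∫ V P d^N x) / Z(V)`. -/
def FP (μ : Measure Λ) (N : ℕ) (P W V : (Fin N → Λ) → ℝ) : ℝ :=
  Real.exp (-∫ x, V x ∂(Pmeas μ N P)) / Zfun μ N W V

/-- Membership in the set `V_P`. -/
def memVP (μ : Measure Λ) (N m : ℕ) (P W V : (Fin N → Λ) → ℝ) : Prop :=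
  Integrable V (Pmeas μ N P) ∧
  Integrable (fun x => Real.exp (-(V x))) (Wmeas μ N W) ∧
  ∃ v, HasSumStruct μ N m V v

/-- Gluing `(y, z) ∈ Λ^m × Λ^{N-m}` into a point of `Λ^N`. -/
def glue {Λ : Type*} {N m : ℕ} (h : m ≤ N) (y : Fin m → Λ) (z : Fin (N - m) → Λ) :
    Fin N → Λ :=
  fun i => Fin.append y z (Fin.cast (by omega) i)

/-- The `m`-particle reduction `ρ^{(m)}` of `P`. -/
def rho (μ : Measure Λ) (N m : ℕ) (h : m ≤ N) (P : (Fin N → Λ) → ℝ)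
    (y : Fin m → Λ) : ℝ :=
  ∫ z, P (glue h y z) ∂(pm μ (N - m))

/-- The measure `ρ^{(m)} d^m x`. -/
def rhomeas (μ : Measure Λ) (N m : ℕ) (h : m ≤ N) (P : (Fin N → Λ) → ℝ) :
    Measure (Fin m → Λ) :=
  (pm μ m).withDensity fun y => ENNReal.ofReal (rho μ N m h P y)

/-- Membership in the set `V_{ρ^{(m)}}`. -/
def memVrho (μ : Measure Λ) (N m : ℕ) (h : m ≤ N) (P W V : (Fin N → Λ) → ℝ) : Prop :=
  Integrable (fun x => Real.exp (-(V x))) (Wmeas μ N W) ∧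
  ∃ v, HasSumStruct μ N m V v ∧ Integrable v (rhomeas μ N m h P)

/-- The `m`-particle density `ρ_U^{(m)}` associated with the potential `U`. -/
def rhoU (μ : Measure Λ) (N m : ℕ) (h : m ≤ N) (W U : (Fin N → Λ) → ℝ)
    (y : Fin m → Λ) : ℝ :=
  (∫ z, Real.exp (-(W (glue h y z)) - U (glue h y z)) ∂(pm μ (N - m))) / Zfun μ N W U

/-!
The functional `F_P` is `e^{-crossEntropy}` with `crossEntropy V = ∫ V dp + log Z(V)`, which does
not change when a constant is added to `V`, so potentials may be normalized to `Z = 1`. Cross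
entropy is convex, and its defect at the midpoint of two normalized potentials bounds the squared
`L²` distance of `e^{-V/2}` and `e^{-V'/2}`. Equality of two minima therefore forces the normalized
potentials to agree. For a minimizing sequence `V_n` the functions `e^{-V_n/2}` form a Cauchy
sequence, so they converge a.e. if the sequence is chosen to minimize fast enough; the limit does
not vanish because the integrals of `V_n + llr + e^{-(V_n + llr)} ≥ 1` stay bounded, hence `V_n`
itself converges a.e., and Fatou's lemma makes the limit a minimizer. Finally, the `m`-sum structure
survives a.e. limits, because a generator is a finite linear combination of values of its `m`-sum at
the configurations of `N` points chosen among `N + m` points.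
-/

open scoped Topology

section Integration

variable {X : Type*} [MeasurableSpace X] {μ : Measure X}

lemma lintegral_liminf_le_of_tendsto_integral {f : ℕ → X → ℝ} {c : ℝ}
    (hf : ∀ n, Integrable (f n) μ) (hf₀ : ∀ n, 0 ≤ f n)
    (hc : Tendsto (fun n => ∫ x, f n x ∂μ) atTop (𝓝 c)) :
    ∫⁻ x, liminf (fun n => ENNReal.ofReal (f n x)) atTop ∂μ ≤ ENNReal.ofReal c := by
  refine (lintegral_liminf_le' fun n => (hf n).1.aemeasurable.ennreal_ofReal).trans_eq ?_
  simp_rw [← ofReal_integral_eq_lintegral_ofReal (hf _) (ae_of_all _ (hf₀ _))]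
  exact (ENNReal.tendsto_ofReal hc).liminf_eq

lemma integrable_and_integral_le_of_tendsto {f : ℕ → X → ℝ} {g : X → ℝ} {c : ℝ}
    (hf : ∀ n, Integrable (f n) μ) (hf₀ : ∀ n, 0 ≤ f n)
    (hg : ∀ᵐ x ∂μ, Tendsto (fun n => f n x) atTop (𝓝 (g x)))
    (hc : Tendsto (fun n => ∫ x, f n x ∂μ) atTop (𝓝 c)) :
    Integrable g μ ∧ ∫ x, g x ∂μ ≤ c := by
  have hg_meas : AEStronglyMeasurable g μ :=
    aestronglyMeasurable_of_tendsto_ae atTop (fun n => (hf n).1) hg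
  have hg₀ : 0 ≤ᵐ[μ] g := by
    filter_upwards [hg] with x hx using ge_of_tendsto' hx fun n => hf₀ n x
  have hc₀ : 0 ≤ c := ge_of_tendsto' hc fun n => integral_nonneg (hf₀ n)
  have hle : ∫⁻ x, ENNReal.ofReal (g x) ∂μ ≤ ENNReal.ofReal c := by
    refine (lintegral_congr_ae ?_).trans_le (lintegral_liminf_le_of_tendsto_integral hf hf₀ hc)
    filter_upwards [hg] with x hx using (ENNReal.tendsto_ofReal hx).liminf_eq.symm
  have hg_int : Integrable g μ :=
    ⟨hg_meas, (hasFiniteIntegral_iff_ofReal hg₀).2 (hle.trans_lt ENNReal.ofReal_lt_top)⟩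
  rw [← ofReal_integral_eq_lintegral_ofReal hg_int hg₀, ENNReal.ofReal_le_ofReal_iff hc₀] at hle
  exact ⟨hg_int, hle⟩

lemma ae_not_tendsto_atTop_of_tendsto_integral {f : ℕ → X → ℝ} {c : ℝ}
    (hf : ∀ n, Integrable (f n) μ) (hf₀ : ∀ n, 0 ≤ f n)
    (hc : Tendsto (fun n => ∫ x, f n x ∂μ) atTop (𝓝 c)) :
    ∀ᵐ x ∂μ, ¬ Tendsto (fun n => f n x) atTop atTop := by
  have hmeas : AEMeasurable (fun x => liminf (fun n => ENNReal.ofReal (f n x)) atTop) μ := by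
    refine ⟨_, Measurable.liminf fun n => (hf n).1.aemeasurable.measurable_mk.ennreal_ofReal, ?_⟩
    filter_upwards [ae_all_iff.2 fun n => (hf n).1.aemeasurable.ae_eq_mk] with x hx
    simp_rw [hx]
  filter_upwards [ae_lt_top' hmeas ((lintegral_liminf_le_of_tendsto_integral hf hf₀ hc).trans_lt
    ENNReal.ofReal_lt_top).ne] with x hx htop
  exact hx.ne (ENNReal.tendsto_ofReal_atTop.comp htop).liminf_eq

lemma eLpNorm_two_lt_ofReal_of_integral_sq_lt {f : X → ℝ} (hf : MemLp f 2 μ) {b : ℝ} (hb : 0 < b)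
    (h : ∫ x, f x ^ 2 ∂μ < b ^ 2) : eLpNorm f 2 μ < ENNReal.ofReal b := by
  rw [hf.eLpNorm_eq_integral_rpow_norm two_ne_zero ENNReal.ofNat_ne_top,
    ENNReal.ofReal_lt_ofReal_iff hb]
  simpa [Real.sqrt_eq_rpow] using (Real.sqrt_lt' hb).2 h

lemma ae_exists_tendsto_of_integral_sq_sub_lt {f : ℕ → X → ℝ} (hf : ∀ n, MemLp (f n) 2 μ)
    (h : ∀ k n m, k ≤ n → k ≤ m → ∫ x, (f n x - f m x) ^ 2 ∂μ < (1 / 4) ^ k) :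
    ∀ᵐ x ∂μ, ∃ l, Tendsto (fun n => f n x) atTop (𝓝 l) := by
  refine Lp.ae_tendsto_of_cauchy_eLpNorm (p := 2) (B := fun k => ENNReal.ofReal ((1 / 2) ^ k))
    (fun n => (hf n).1) one_le_two ?_ fun k n m hn hm => ?_
  · rw [← ENNReal.ofReal_tsum_of_nonneg (fun k => by positivity) summable_geometric_two]
    exact ENNReal.ofReal_ne_top
  · refine eLpNorm_two_lt_ofReal_of_integral_sq_lt ((hf n).sub (hf m)) (by positivity) ?_
    rw [← pow_mul, mul_comm, pow_mul]
    norm_num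
    simpa using h k n m hn hm

lemma ae_exists_tendsto_of_tendsto_exp_neg_half {h : ℕ → X → ℝ} {c : ℝ}
    (hint : ∀ n, Integrable (fun x => h n x + exp (-h n x)) μ)
    (hc : Tendsto (fun n => ∫ x, (h n x + exp (-h n x)) ∂μ) atTop (𝓝 c))
    (hconv : ∀ᵐ x ∂μ, ∃ l, Tendsto (fun n => exp (-h n x / 2)) atTop (𝓝 l)) :
    ∀ᵐ x ∂μ, ∃ l, Tendsto (fun n => h n x) atTop (𝓝 l) := by
  have hnonneg : ∀ n, 0 ≤ fun x => h n x + exp (-h n x) := fun n x => by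
    simp only [Pi.zero_apply]
    linarith [Real.one_sub_le_exp_neg (h n x)]
  filter_upwards [ae_not_tendsto_atTop_of_tendsto_integral hint hnonneg hc, hconv]
    with x hx ⟨l, hl⟩
  have hlog : ∀ n, -2 * log (exp (-h n x / 2)) = h n x := fun n => by rw [Real.log_exp]; ring
  have hl_ne : l ≠ 0 := by
    rintro rfl
    refine hx (tendsto_atTop_mono (fun n => le_add_of_nonneg_right (exp_pos _).le) ?_)
    have hbot : Tendsto (fun n => log (exp (-h n x / 2))) atTop atBot :=
      tendsto_log_nhdsGT_zero.comp
        (tendsto_nhdsWithin_iff.2 ⟨hl, Eventually.of_forall fun n => exp_pos _⟩)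
    exact (hbot.const_mul_atBot_of_neg (by norm_num : (-2 : ℝ) < 0)).congr hlog
  exact ⟨-2 * log l, ((hl.log hl_ne).const_mul (-2)).congr hlog⟩

end Integration

section CrossEntropy

variable {X : Type*} [MeasurableSpace X]

/-- The partition function `∫ e^{-V} dν` of the potential `V` relative to the measure `ν`. -/
def partitionFunction (ν : Measure X) (V : X → ℝ) : ℝ := ∫ x, exp (-V x) ∂ν

/-- The cross entropy `∫ V dp + log ∫ e^{-V} dν` of `p` relative to the Gibbs measure with
`ν`-density proportional to `e^{-V}`. The functional `F_P` is `e^{-crossEntropy}`, so that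
maximizing the former is minimizing the latter. -/
def crossEntropy (p ν : Measure X) (V : X → ℝ) : ℝ :=
  ∫ x, V x ∂p + log (partitionFunction ν V)

/-- The features of the classes `V_P` and `V_{ρ^{(m)}}` that the variational argument uses. -/
structure IsPotentialClass (ν : Measure X) (D : Set (X → ℝ)) : Prop where
  integrable_exp_neg : ∀ V ∈ D, Integrable (fun x => exp (-V x)) ν
  add_const : ∀ V ∈ D, ∀ c : ℝ, (fun x => V x + c) ∈ D
  convex : Convex ℝ D

variable {p ν : Measure X} {D : Set (X → ℝ)} {V V' : X → ℝ}

lemma integrable_exp_neg_add_const (hV : Integrable (fun x => exp (-V x)) ν) (c : ℝ) :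
    Integrable (fun x => exp (-(V x + c))) ν := by
  simpa only [neg_add, exp_add] using hV.mul_const (exp (-c))

lemma aemeasurable_of_integrable_exp_neg (hV : Integrable (fun x => exp (-V x)) ν) :
    AEMeasurable V ν := by
  refine hV.1.aemeasurable.log.neg.congr (ae_of_all _ fun x => ?_)
  simp

lemma convex_setOf_integrable_exp_neg :
    Convex ℝ {V : X → ℝ | Integrable (fun x => exp (-V x)) ν} := by
  intro V hV V' hV' a b ha hb hab
  have hmeas : AEMeasurable (a • V + b • V') ν :=
    ((aemeasurable_of_integrable_exp_neg hV).const_smul a).add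
      ((aemeasurable_of_integrable_exp_neg hV').const_smul b)
  refine ((hV.const_mul a).add (hV'.const_mul b)).mono' hmeas.neg.exp.aestronglyMeasurable
    (ae_of_all _ fun x => ?_)
  have := convexOn_exp.2 (Set.mem_univ (-V x)) (Set.mem_univ (-V' x)) ha hb hab
  rw [norm_of_nonneg (exp_pos _).le]
  simpa [neg_add, add_comm] using this

lemma partitionFunction_pos [NeZero ν] (hV : Integrable (fun x => exp (-V x)) ν) :
    0 < partitionFunction ν V :=
  integral_exp_pos hV

lemma partitionFunction_add_const (V : X → ℝ) (c : ℝ) :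
    partitionFunction ν (fun x => V x + c) = partitionFunction ν V * exp (-c) := by
  simp only [partitionFunction, neg_add, exp_add, integral_mul_const]

lemma partitionFunction_add_log [NeZero ν] (hV : Integrable (fun x => exp (-V x)) ν) :
    partitionFunction ν (fun x => V x + log (partitionFunction ν V)) = 1 := by
  have hpos := partitionFunction_pos hV
  rw [partitionFunction_add_const, exp_neg, exp_log hpos, mul_inv_cancel₀ hpos.ne']

lemma log_partitionFunction_add_const [NeZero ν] (hV : Integrable (fun x => exp (-V x)) ν)
    (c : ℝ) : log (partitionFunction ν fun x => V x + c) = log (partitionFunction ν V) - c := by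
  have hpos := partitionFunction_pos hV
  rw [partitionFunction_add_const, log_mul hpos.ne' (exp_pos _).ne', log_exp, sub_eq_add_neg]

lemma crossEntropy_add_const [IsProbabilityMeasure p] [NeZero ν] (hVp : Integrable V p)
    (hV : Integrable (fun x => exp (-V x)) ν) (c : ℝ) :
    crossEntropy p ν (fun x => V x + c) = crossEntropy p ν V := by
  rw [crossEntropy, log_partitionFunction_add_const hV, integral_add hVp (integrable_const c),
    integral_const, probReal_univ, one_smul, crossEntropy]
  ring

/-- Without integrability, `∫ (V + c) dp` takes the junk value `0` for every `c`, so that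
`crossEntropy` is not bounded below along the translates of `V`. -/
lemma IsPotentialClass.integrable_of_bddBelow [IsFiniteMeasure p] [NeZero ν]
    (hD : IsPotentialClass ν D) (hbdd : BddBelow (crossEntropy p ν '' D)) (hV : V ∈ D) :
    Integrable V p := by
  by_contra hVp
  obtain ⟨b, hb⟩ := hbdd
  have hb' : ∀ c, b ≤ log (partitionFunction ν V) - c := fun c => by
    have hVc : ¬ Integrable (fun x => V x + c) p := fun h =>
      hVp ((integrable_add_iff_integrable_left (integrable_const c)).1 h)
    have := hb (Set.mem_image_of_mem _ (hD.add_const V hV c))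
    rwa [crossEntropy, integral_undef hVc, zero_add,
      log_partitionFunction_add_const (hD.integrable_exp_neg V hV)] at this
  linarith [hb' (log (partitionFunction ν V) - b + 1)]

lemma midpoint_fun_apply {α : Type*} (V V' : α → ℝ) (x : α) :
    midpoint ℝ V V' x = (V x + V' x) / 2 := by
  simp [midpoint_eq_smul_add, div_eq_inv_mul]

lemma exp_neg_half_sq (t : ℝ) : exp (-t / 2) ^ 2 = exp (-t) := by
  rw [← exp_nat_mul]
  congr 1
  push_cast
  ring

lemma exp_neg_half_sub_sq {α : Type*} (V V' : α → ℝ) (x : α) :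
    (exp (-V x / 2) - exp (-V' x / 2)) ^ 2 =
      exp (-V x) + exp (-V' x) - 2 * exp (-midpoint ℝ V V' x) := by
  have hmul : exp (-V x / 2) * exp (-V' x / 2) = exp (-midpoint ℝ V V' x) := by
    rw [← exp_add, midpoint_fun_apply]
    congr 1
    ring
  rw [sub_sq, exp_neg_half_sq, exp_neg_half_sq, mul_assoc, hmul]
  ring

lemma memLp_two_exp_neg_half (hV : Integrable (fun x => exp (-V x)) ν) :
    MemLp (fun x => exp (-V x / 2)) 2 ν := by
  have hmeas := ((aemeasurable_of_integrable_exp_neg hV).neg.div_const 2).exp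
  refine (memLp_two_iff_integrable_sq hmeas.aestronglyMeasurable).2 ?_
  simpa only [Pi.neg_apply, exp_neg_half_sq] using hV

/-- The squared Hellinger distance of two Gibbs measures is `2 - 2 Z(midpoint)`, where
`Z(midpoint) ≥ 1 + log Z(midpoint)`, and `-log Z(midpoint)` is half the convexity defect. -/
lemma integral_sq_exp_neg_half_sub_le (hVp : Integrable V p) (hVp' : Integrable V' p)
    (hV : Integrable (fun x => exp (-V x)) ν) (hV' : Integrable (fun x => exp (-V' x)) ν)
    (hZ : partitionFunction ν V = 1) (hZ' : partitionFunction ν V' = 1) :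
    ∫ x, (exp (-V x / 2) - exp (-V' x / 2)) ^ 2 ∂ν ≤
      crossEntropy p ν V + crossEntropy p ν V' - 2 * crossEntropy p ν (midpoint ℝ V V') := by
  have : NeZero ν := ⟨fun h => by simp [partitionFunction, h] at hZ⟩
  have hmid : Integrable (fun x => exp (-midpoint ℝ V V' x)) ν :=
    convex_setOf_integrable_exp_neg.midpoint_mem hV hV'
  have hlog := log_le_sub_one_of_pos (partitionFunction_pos hmid)
  have hsq : ∫ x, (exp (-V x / 2) - exp (-V' x / 2)) ^ 2 ∂ν =
      partitionFunction ν V + partitionFunction ν V' -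
        2 * partitionFunction ν (midpoint ℝ V V') := by
    simp only [exp_neg_half_sub_sq, partitionFunction]
    rw [← integral_add hV hV', ← integral_const_mul]
    exact integral_sub (hV.add hV') (hmid.const_mul 2)
  have hint : ∫ x, midpoint ℝ V V' x ∂p = (∫ x, V x ∂p + ∫ x, V' x ∂p) / 2 := by
    simp only [midpoint_fun_apply]
    rw [integral_div, integral_add hVp hVp']
  rw [hsq]
  simp only [crossEntropy, hint, hZ, hZ', log_one]
  linarith

lemma IsPotentialClass.ae_sub_eq_const_of_isMinOn [IsProbabilityMeasure p] [NeZero ν]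
    (hD : IsPotentialClass ν D) (hV : V ∈ D) (hV' : V' ∈ D)
    (hmin : IsMinOn (crossEntropy p ν) D V) (hmin' : IsMinOn (crossEntropy p ν) D V') :
    ∃ C : ℝ, ∀ᵐ x ∂ν, V' x - V x = C := by
  have hDp : ∀ {U}, U ∈ D → Integrable U p := hD.integrable_of_bddBelow hmin.bddBelow
  have hDν := hD.integrable_exp_neg
  set c := log (partitionFunction ν V)
  set c' := log (partitionFunction ν V')
  have hVc := hD.add_const V hV c
  have hVc' := hD.add_const V' hV' c'
  have hsq := integral_sq_exp_neg_half_sub_le (hDp hVc) (hDp hVc') (hDν _ hVc) (hDν _ hVc')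
    (partitionFunction_add_log (hDν V hV)) (partitionFunction_add_log (hDν V' hV'))
  rw [crossEntropy_add_const (hDp hV) (hDν V hV),
    crossEntropy_add_const (hDp hV') (hDν V' hV')] at hsq
  have hmid := hD.convex.midpoint_mem hVc hVc'
  have hzero : ∫ x, (exp (-(V x + c) / 2) - exp (-(V' x + c') / 2)) ^ 2 ∂ν = 0 :=
    (hsq.trans (by linarith [isMinOn_iff.1 hmin _ hmid, isMinOn_iff.1 hmin' _ hmid])).antisymm
      (integral_nonneg fun x => sq_nonneg _)
  have hsq_int := ((memLp_two_exp_neg_half (hDν _ hVc)).sub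
    (memLp_two_exp_neg_half (hDν _ hVc'))).integrable_sq
  refine ⟨c - c', ?_⟩
  filter_upwards [(integral_eq_zero_iff_of_nonneg (fun x => sq_nonneg _) hsq_int).1 hzero]
    with x hx
  have := exp_injective (sub_eq_zero.1 (sq_eq_zero_iff.1 hx))
  linarith

lemma IsPotentialClass.exists_partitionFunction_eq_one [IsProbabilityMeasure p] [NeZero ν]
    (hD : IsPotentialClass ν D) (hV : V ∈ D) (hVp : Integrable V p) :
    ∃ V' ∈ D, partitionFunction ν V' = 1 ∧ crossEntropy p ν V' = crossEntropy p ν V :=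
  ⟨_, hD.add_const V hV _, partitionFunction_add_log (hD.integrable_exp_neg V hV),
    crossEntropy_add_const hVp (hD.integrable_exp_neg V hV) _⟩

lemma IsPotentialClass.exists_seq_tendsto_sInf [IsProbabilityMeasure p] [NeZero ν]
    (hD : IsPotentialClass ν D) (hne : D.Nonempty) (hDp : ∀ V ∈ D, Integrable V p)
    (hbdd : BddBelow (crossEntropy p ν '' D)) :
    ∃ V : ℕ → X → ℝ, (∀ n, V n ∈ D) ∧ (∀ n, partitionFunction ν (V n) = 1) ∧
      Tendsto (fun n => ∫ x, V n x ∂p) atTop (𝓝 (sInf (crossEntropy p ν '' D))) ∧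
      ∀ k n m, k ≤ n → k ≤ m →
        ∫ x, (exp (-V n x / 2) - exp (-V m x / 2)) ^ 2 ∂ν < (1 / 4) ^ k := by
  set a := sInf (crossEntropy p ν '' D)
  have ha : ∀ V ∈ D, a ≤ crossEntropy p ν V := fun V hV =>
    csInf_le hbdd (Set.mem_image_of_mem _ hV)
  have hexists : ∀ n : ℕ, ∃ V ∈ D, partitionFunction ν V = 1 ∧
      crossEntropy p ν V < a + (1 / 4) ^ n / 2 := fun n => by
    obtain ⟨-, ⟨V, hV, rfl⟩, hVa⟩ := Real.lt_sInf_add_pos (hne.image (crossEntropy p ν))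
      (show (0 : ℝ) < (1 / 4) ^ n / 2 by positivity)
    obtain ⟨V', hV', hZ, heq⟩ := hD.exists_partitionFunction_eq_one hV (hDp V hV)
    exact ⟨V', hV', hZ, heq.trans_lt hVa⟩
  choose V hV hZ hVa using hexists
  have herror : Tendsto (fun n : ℕ => a + (1 / 4 : ℝ) ^ n / 2) atTop (𝓝 a) := by
    simpa using ((tendsto_pow_atTop_nhds_zero_of_lt_one (r := (1 / 4 : ℝ)) (by norm_num)
      (by norm_num)).div_const 2).const_add a
  have hlim : Tendsto (fun n => crossEntropy p ν (V n)) atTop (𝓝 a) :=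
    tendsto_of_tendsto_of_tendsto_of_le_of_le tendsto_const_nhds herror
      (fun n => ha _ (hV n)) fun n => (hVa n).le
  refine ⟨V, hV, hZ, hlim.congr fun n => by rw [crossEntropy, hZ, log_one, add_zero],
    fun k n m hn hm => ?_⟩
  have hmono : ∀ {n}, k ≤ n → crossEntropy p ν (V n) < a + (1 / 4) ^ k / 2 := fun {n} hkn => by
    have := pow_le_pow_of_le_one (show (0 : ℝ) ≤ 1 / 4 by norm_num) (by norm_num) hkn
    linarith [hVa n]
  have hmid := ha _ (hD.convex.midpoint_mem (hV n) (hV m))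
  linarith [hmono hn, hmono hm, integral_sq_exp_neg_half_sub_le (hDp _ (hV n)) (hDp _ (hV m))
    (hD.integrable_exp_neg _ (hV n)) (hD.integrable_exp_neg _ (hV m)) (hZ n) (hZ m)]

end CrossEntropy

section Existence

variable {X : Type*} [MeasurableSpace X] {p ν : Measure X} [IsProbabilityMeasure p]
  [SigmaFinite ν] {V : X → ℝ}

lemma exp_neg_add_llr_ae_eq (hpν : p ≪ ν) (V : X → ℝ) :
    (fun x => exp (-(V x + llr p ν x))) =ᵐ[p] fun x => (ν.rnDeriv p x).toReal • exp (-V x) := by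
  filter_upwards [exp_neg_llr hpν] with x hx
  rw [neg_add, exp_add, hx, smul_eq_mul, mul_comm]

lemma integrable_exp_neg_add_llr_iff (hpν : p ≪ ν) (hνp : ν ≪ p) :
    Integrable (fun x => exp (-(V x + llr p ν x))) p ↔ Integrable (fun x => exp (-V x)) ν := by
  rw [integrable_congr (exp_neg_add_llr_ae_eq hpν V), integrable_rnDeriv_smul_iff hνp]

lemma integral_exp_neg_add_llr (hpν : p ≪ ν) (hνp : ν ≪ p) (V : X → ℝ) :
    ∫ x, exp (-(V x + llr p ν x)) ∂p = partitionFunction ν V := by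
  rw [integral_congr_ae (exp_neg_add_llr_ae_eq hpν V), integral_rnDeriv_smul hνp,
    partitionFunction]

lemma integrable_llr_of_integrable_posPart (hpν : p ≪ ν) (hνp : ν ≪ p)
    (hllr : Integrable (fun x => max (llr p ν x) 0) p) (hVp : Integrable V p)
    (hV : Integrable (fun x => exp (-V x)) ν) : Integrable (llr p ν) p := by
  have hexp := (integrable_exp_neg_add_llr_iff hpν hνp).2 hV
  refine ((hllr.const_mul 2).add (hVp.add hexp)).mono' (measurable_llr p ν).aestronglyMeasurable
    (ae_of_all _ fun x => ?_)
  have hle := le_max_left (llr p ν x) 0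
  have hnonneg := le_max_right (llr p ν x) 0
  have hexp_ge := one_sub_le_exp_neg (V x + llr p ν x)
  exact abs_le.2 ⟨by simp only [Pi.add_apply]; linarith, by simp only [Pi.add_apply]; linarith⟩

lemma neg_integral_llr_le_crossEntropy (hpν : p ≪ ν) (hνp : ν ≪ p)
    (hllr : Integrable (llr p ν) p) (hVp : Integrable V p)
    (hV : Integrable (fun x => exp (-V x)) ν) : -∫ x, llr p ν x ∂p ≤ crossEntropy p ν V := by
  have hjensen : exp (∫ x, -(V x + llr p ν x) ∂p) ≤ ∫ x, exp (-(V x + llr p ν x)) ∂p :=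
    convexOn_exp.map_integral_le continuous_exp.continuousOn isClosed_univ
      (ae_of_all _ fun _ => Set.mem_univ _) (hVp.add hllr).neg
      ((integrable_exp_neg_add_llr_iff hpν hνp).2 hV)
  rw [integral_exp_neg_add_llr hpν hνp, integral_neg, integral_add hVp hllr] at hjensen
  have hlog := (le_log_iff_exp_le ((exp_pos _).trans_le hjensen)).2 hjensen
  rw [crossEntropy]
  linarith

lemma integrable_add_llr_add_exp_neg (hpν : p ≪ ν) (hνp : ν ≪ p) (hllr : Integrable (llr p ν) p)
    (hVp : Integrable V p) (hV : Integrable (fun x => exp (-V x)) ν) :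
    Integrable (fun x => V x + llr p ν x + exp (-(V x + llr p ν x))) p :=
  (hVp.add hllr).add ((integrable_exp_neg_add_llr_iff hpν hνp).2 hV)

lemma integral_add_llr_add_exp_neg (hpν : p ≪ ν) (hνp : ν ≪ p) (hllr : Integrable (llr p ν) p)
    (hVp : Integrable V p) (hV : Integrable (fun x => exp (-V x)) ν) :
    ∫ x, (V x + llr p ν x + exp (-(V x + llr p ν x))) ∂p =
      ∫ x, V x ∂p + ∫ x, llr p ν x ∂p + partitionFunction ν V := by
  rw [← integral_exp_neg_add_llr hpν hνp, ← integral_add hVp hllr]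
  exact integral_add (hVp.add hllr) ((integrable_exp_neg_add_llr_iff hpν hνp).2 hV)

/-- Fatou's lemma applies to `V + llr p ν + e^{-(V + llr p ν)} ≥ 1`, whose `p`-integral is
`crossEntropy p ν V` up to a constant when `V` is normalized, and bounds it in general. -/
lemma integrable_and_crossEntropy_le_of_tendsto {V : ℕ → X → ℝ} {U : X → ℝ} {a : ℝ}
    (hpν : p ≪ ν) (hνp : ν ≪ p) (hllr : Integrable (llr p ν) p) (hVp : ∀ n, Integrable (V n) p)
    (hV : ∀ n, Integrable (fun x => exp (-V n x)) ν) (hZ : ∀ n, partitionFunction ν (V n) = 1)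
    (ha : Tendsto (fun n => ∫ x, V n x ∂p) atTop (𝓝 a))
    (hU : ∀ᵐ x ∂p, Tendsto (fun n => V n x) atTop (𝓝 (U x))) :
    Integrable U p ∧ Integrable (fun x => exp (-U x)) ν ∧ crossEntropy p ν U ≤ a := by
  have hexp_int : Integrable (fun x => exp (-U x)) ν :=
    (integrable_and_integral_le_of_tendsto hV (fun n x => (exp_pos _).le)
      (hνp.ae_le (hU.mono fun x hx => hx.neg.rexp))
      (tendsto_const_nhds.congr fun n => (hZ n).symm)).1
  obtain ⟨hsum_int, hsum_le⟩ := integrable_and_integral_le_of_tendsto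
    (fun n => integrable_add_llr_add_exp_neg hpν hνp hllr (hVp n) (hV n))
    (fun n x => zero_le_one.trans (sub_le_iff_le_add'.1 (one_sub_le_exp_neg _)))
    (hU.mono fun x hx => (hx.add_const _).add (hx.add_const _).neg.rexp)
    (((ha.add_const _).add_const 1).congr fun n => by
      rw [integral_add_llr_add_exp_neg hpν hνp hllr (hVp n) (hV n), hZ])
  have hUp : Integrable U p :=
    ((hsum_int.sub ((integrable_exp_neg_add_llr_iff hpν hνp).2 hexp_int)).sub hllr).congr
      (ae_of_all _ fun x => by simp)
  rw [integral_add_llr_add_exp_neg hpν hνp hllr hUp hexp_int] at hsum_le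
  have : NeZero ν := ⟨fun h => by simpa [partitionFunction, h] using hZ 0⟩
  have hlog := log_le_sub_one_of_pos (partitionFunction_pos hexp_int)
  refine ⟨hUp, hexp_int, ?_⟩
  rw [crossEntropy]
  linarith

lemma ae_exists_tendsto_of_integral_sq_exp_neg_half_sub_lt {V : ℕ → X → ℝ} {a : ℝ}
    (hpν : p ≪ ν) (hνp : ν ≪ p) (hllr : Integrable (llr p ν) p) (hVp : ∀ n, Integrable (V n) p)
    (hV : ∀ n, Integrable (fun x => exp (-V n x)) ν) (hZ : ∀ n, partitionFunction ν (V n) = 1)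
    (ha : Tendsto (fun n => ∫ x, V n x ∂p) atTop (𝓝 a))
    (hcauchy : ∀ k n m, k ≤ n → k ≤ m →
      ∫ x, (exp (-V n x / 2) - exp (-V m x / 2)) ^ 2 ∂ν < (1 / 4) ^ k) :
    ∀ᵐ x ∂p, ∃ l, Tendsto (fun n => V n x) atTop (𝓝 l) := by
  have hexp : ∀ᵐ x ∂p, _ := hpν.ae_le
    (ae_exists_tendsto_of_integral_sq_sub_lt (fun n => memLp_two_exp_neg_half (hV n)) hcauchy)
  have hsum := ae_exists_tendsto_of_tendsto_exp_neg_half (h := fun n x => V n x + llr p ν x)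
    (fun n => integrable_add_llr_add_exp_neg hpν hνp hllr (hVp n) (hV n))
    (((ha.add_const _).add_const 1).congr fun n => by
      rw [integral_add_llr_add_exp_neg hpν hνp hllr (hVp n) (hV n), hZ])
    (hexp.mono fun x ⟨l, hl⟩ => ⟨l * exp (-llr p ν x / 2),
      (hl.mul_const _).congr fun n => by rw [← exp_add, neg_add, add_div]⟩)
  filter_upwards [hsum] with x ⟨l, hl⟩
  exact ⟨l - llr p ν x, by simpa using hl.sub_const (llr p ν x)⟩

theorem IsPotentialClass.exists_isMinOn_crossEntropy {D : Set (X → ℝ)} (hpν : p ≪ ν)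
    (hνp : ν ≪ p) (hD : IsPotentialClass ν D) (hne : D.Nonempty) (hDp : ∀ V ∈ D, Integrable V p)
    (hllr : Integrable (fun x => max (llr p ν x) 0) p)
    (hclosed : ∀ (V : ℕ → X → ℝ) (U : X → ℝ), (∀ n, V n ∈ D) →
      (∀ᵐ x ∂p, Tendsto (fun n => V n x) atTop (𝓝 (U x))) → Integrable U p →
      Integrable (fun x => exp (-U x)) ν → U ∈ D) :
    ∃ U ∈ D, IsMinOn (crossEntropy p ν) D U := by
  have : NeZero ν := ⟨fun h => IsProbabilityMeasure.ne_zero p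
    (Measure.absolutelyContinuous_zero_iff.1 (h ▸ hpν))⟩
  have hDν := hD.integrable_exp_neg
  have ⟨V₀, hV₀⟩ := hne
  have hllr_int := integrable_llr_of_integrable_posPart hpν hνp hllr (hDp V₀ hV₀) (hDν V₀ hV₀)
  have hbdd : BddBelow (crossEntropy p ν '' D) := ⟨_, Set.forall_mem_image.2 fun V hV =>
    neg_integral_llr_le_crossEntropy hpν hνp hllr_int (hDp V hV) (hDν V hV)⟩
  obtain ⟨V, hV, hZ, hlim, hcauchy⟩ := hD.exists_seq_tendsto_sInf hne hDp hbdd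
  have hconv := ae_exists_tendsto_of_integral_sq_exp_neg_half_sub_lt hpν hνp hllr_int
    (fun n => hDp _ (hV n)) (fun n => hDν _ (hV n)) hZ hlim hcauchy
  have hU : ∀ᵐ x ∂p, Tendsto (fun n => V n x) atTop (𝓝 (limUnder atTop fun n => V n x)) :=
    hconv.mono fun x => tendsto_nhds_limUnder
  obtain ⟨hUp, hUν, hle⟩ := integrable_and_crossEntropy_le_of_tendsto hpν hνp hllr_int
    (fun n => hDp _ (hV n)) (fun n => hDν _ (hV n)) hZ hlim hU
  exact ⟨_, hclosed V _ hV hU hUp hUν, isMinOn_iff.2 fun V' hV' =>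
    hle.trans (csInf_le hbdd (Set.mem_image_of_mem _ hV'))⟩

end Existence

section SubsetSums

variable {ι : Type*} [DecidableEq ι]

lemma sum_powersetCard_succ_insert {E : Type*} [AddCommMonoid E] (f : Finset ι → E) (m : ℕ)
    {a : ι} {S : Finset ι} (ha : a ∉ S) :
    ∑ A ∈ (insert a S).powersetCard (m + 1), f A =
      ∑ A ∈ S.powersetCard (m + 1), f A + ∑ A ∈ S.powersetCard m, f (insert a A) := by
  have hnotMem : ∀ {k}, ∀ A ∈ S.powersetCard k, a ∉ A := fun A hA h =>
    ha ((Finset.mem_powersetCard.1 hA).1 h)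
  rw [Finset.powersetCard_succ_insert ha, Finset.sum_union, Finset.sum_image]
  · intro A hA B hB hAB
    rw [← Finset.erase_insert (hnotMem A hA), ← Finset.erase_insert (hnotMem B hB), hAB]
  · refine Finset.disjoint_left.2 fun A hA hA' => hnotMem A hA ?_
    obtain ⟨B, -, rfl⟩ := Finset.mem_image.1 hA'
    exact Finset.mem_insert_self a B

lemma eq_of_forall_insert_eq {β : Type*} {G : Finset ι} {f : Finset ι → β} {m : ℕ}
    (h : ∀ A ⊆ G, A.card = m → ∀ a ∈ G \ A, ∀ b ∈ G \ A, f (insert a A) = f (insert b A))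
    {A B : Finset ι} (hA : A ⊆ G) (hB : B ⊆ G) (hAcard : A.card = m + 1)
    (hBcard : B.card = m + 1) : f A = f B := by
  induction hk : (A \ B).card generalizing A with
  | zero =>
    have hAB : A ⊆ B := by simpa using hk
    rw [Finset.eq_of_subset_of_card_le hAB (by omega)]
  | succ k ih =>
    have hBA : (B \ A).card = k + 1 := by rw [← hk, Finset.card_sdiff_comm (by omega)]
    obtain ⟨a, ha⟩ : (A \ B).Nonempty := Finset.card_pos.1 (by omega)
    obtain ⟨b, hb⟩ : (B \ A).Nonempty := Finset.card_pos.1 (by omega)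
    have haA : a ∈ A := (Finset.mem_sdiff.1 ha).1
    obtain ⟨hbB, hbA⟩ := Finset.mem_sdiff.1 hb
    have hbA' : b ∉ A.erase a := fun hb' => hbA (Finset.mem_of_mem_erase hb')
    have hcard : (A.erase a).card = m := by rw [Finset.card_erase_of_mem haA]; omega
    have hexchange := h (A.erase a) ((A.erase_subset a).trans hA) hcard a
      (Finset.mem_sdiff.2 ⟨hA haA, A.notMem_erase a⟩) b (Finset.mem_sdiff.2 ⟨hB hbB, hbA'⟩)
    rw [Finset.insert_erase haA] at hexchange
    rw [hexchange]
    refine ih (Finset.insert_subset (hB hbB) ((A.erase_subset a).trans hA))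
      (by rw [Finset.card_insert_of_notMem hbA', hcard]) ?_
    rw [Finset.insert_sdiff_of_mem _ hbB, Finset.erase_sdiff_comm, Finset.card_erase_of_mem ha, hk,
      Nat.add_sub_cancel]

lemma sum_powersetCard_insert_sub_insert {E : Type*} [AddCommGroup E] {G S : Finset ι}
    {f : Finset ι → E} {n m : ℕ}
    (h : ∀ T ⊆ G, T.card = n + 1 → ∑ A ∈ T.powersetCard (m + 1), f A = 0) (hS : S ⊆ G)
    (hcard : S.card = n) {a b : ι} (ha : a ∈ G \ S) (hb : b ∈ G \ S) :
    ∑ A ∈ S.powersetCard m, (f (insert a A) - f (insert b A)) = 0 := by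
  have hinsert : ∀ c ∈ G \ S, ∑ A ∈ S.powersetCard (m + 1), f A +
      ∑ A ∈ S.powersetCard m, f (insert c A) = 0 := fun c hc => by
    obtain ⟨hcG, hcS⟩ := Finset.mem_sdiff.1 hc
    rw [← sum_powersetCard_succ_insert f m hcS]
    exact h _ (Finset.insert_subset hcG hS) (by rw [Finset.card_insert_of_notMem hcS, hcard])
  rw [Finset.sum_sub_distrib, sub_eq_zero]
  exact add_left_cancel ((hinsert a ha).trans (hinsert b hb).symm)

end SubsetSums

/-- Subtracting the relations for `insert a S` and `insert b S` gives the same problem for `m - 1`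
and the differences `f (insert a A) - f (insert b A)`. -/
lemma eq_zero_of_forall_sum_powersetCard_eq_zero {ι E : Type*} [AddCommGroup E]
    [IsAddTorsionFree E] {m N : ℕ} {G : Finset ι} {f : Finset ι → E} (hmN : m ≤ N)
    (hG : N + m ≤ G.card) (h : ∀ S ⊆ G, S.card = N → ∑ A ∈ S.powersetCard m, f A = 0)
    {A : Finset ι} (hA : A ⊆ G) (hAcard : A.card = m) : f A = 0 := by
  classical
  induction m generalizing N G f A with
  | zero =>
    obtain ⟨S, hSG, hScard⟩ := Finset.exists_subset_card_eq hG
    simpa [Finset.card_eq_zero.1 hAcard] using h S hSG hScard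
  | succ m ih =>
    obtain ⟨n, rfl⟩ := Nat.exists_eq_add_of_le' (Nat.le_of_add_left_le hmN)
    have hexchange : ∀ C ⊆ G, C.card = m → ∀ a ∈ G \ C, ∀ b ∈ G \ C,
        f (insert a C) = f (insert b C) := fun C hC hCcard a ha b hb => by
      rw [Finset.mem_sdiff] at ha hb
      refine sub_eq_zero.1 (ih (N := n) (G := G \ {a, b})
        (f := fun A => f (insert a A) - f (insert b A)) (by omega) ?_ (fun S hS hScard => ?_)
        (Finset.subset_sdiff.2 ⟨hC, ?_⟩) hCcard)
      · have := Finset.le_card_sdiff {a, b} G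
        have := Finset.card_le_two (a := a) (b := b)
        omega
      · obtain ⟨hSG, hSab⟩ := Finset.subset_sdiff.1 hS
        simp only [Finset.disjoint_insert_right, Finset.disjoint_singleton_right] at hSab
        exact sum_powersetCard_insert_sub_insert h hSG hScard
          (Finset.mem_sdiff.2 ⟨ha.1, hSab.1⟩) (Finset.mem_sdiff.2 ⟨hb.1, hSab.2⟩)
      · simp [ha.2, hb.2]
    obtain ⟨S, hSG, hScard⟩ := Finset.exists_subset_card_eq (show n + 1 ≤ G.card by omega)
    have hsum : ∑ B ∈ S.powersetCard (m + 1), f B = ∑ _ ∈ S.powersetCard (m + 1), f A :=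
      Finset.sum_congr rfl fun B hB => by
        rw [Finset.mem_powersetCard] at hB
        exact eq_of_forall_insert_eq hexchange (hB.1.trans hSG) hA hB.2 hAcard
    rw [h S hSG hScard, Finset.sum_const, Finset.card_powersetCard, hScard] at hsum
    exact (nsmul_eq_zero_iff_right (Nat.choose_pos hmN).ne').1 hsum.symm

lemma exists_forall_apply_eq_sum_mul_sum_powersetCard {ι : Type*} {m N : ℕ} {G A : Finset ι}
    (hmN : m ≤ N) (hG : N + m ≤ G.card) (hA : A ⊆ G) (hAcard : A.card = m) :
    ∃ c : Finset ι → ℝ, ∀ f : Finset ι → ℝ,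
      f A = ∑ S ∈ G.powersetCard N, c S * ∑ B ∈ S.powersetCard m, f B := by
  classical
  let sumOver : G.powersetCard N → (Finset ι → ℝ) →ₗ[ℝ] ℝ := fun S =>
    ∑ B ∈ S.1.powersetCard m, LinearMap.proj B
  have hsumOver : ∀ S f, sumOver S f = ∑ B ∈ S.1.powersetCard m, f B := fun S f => by
    simp [sumOver]
  have hker : ⨅ S, LinearMap.ker (sumOver S) ≤
      LinearMap.ker (LinearMap.proj A : (Finset ι → ℝ) →ₗ[ℝ] ℝ) := by
    intro f hf
    simp only [Submodule.mem_iInf, LinearMap.mem_ker, hsumOver] at hf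
    exact eq_zero_of_forall_sum_powersetCard_eq_zero hmN hG
      (fun S hS hScard => hf ⟨S, Finset.mem_powersetCard.2 ⟨hS, hScard⟩⟩) hA hAcard
  obtain ⟨c, hc⟩ := (Submodule.mem_span_range_iff_exists_fun ℝ).1 (mem_span_of_iInf_ker_le_ker hker)
  refine ⟨fun S => if hS : S ∈ G.powersetCard N then c ⟨S, hS⟩ else 0, fun f => ?_⟩
  rw [← Finset.sum_attach]
  simpa [hsumOver, Finset.univ_eq_attach] using (LinearMap.congr_fun hc f).symm

section SumStructure

/-- The value of `v` at the coordinates of `x` with indices in `A`, listed in increasing order;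
it is `0` unless `A` has `m` elements. The `m`-sum `mSum N m v x` is by definition the sum of these
values over the `m`-element subsets `A` of `Fin N`. -/
def evalFinset {α I : Type*} [LinearOrder I] {m : ℕ} (v : (Fin m → α) → ℝ) (x : I → α)
    (A : Finset I) : ℝ :=
  if h : A.card = m then v (fun i => x (A.orderEmbOfFin h i)) else 0

lemma evalFinset_of_card_eq {α I : Type*} [LinearOrder I] {m : ℕ} {A : Finset I}
    (hA : A.card = m) (v : (Fin m → α) → ℝ) (x : I → α) :
    evalFinset v x A = v (x ∘ A.orderEmbOfFin hA) :=
  dif_pos hA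

lemma evalFinset_map_univ {α I : Type*} [LinearOrder I] {m : ℕ} (v : (Fin m → α) → ℝ)
    (x : I → α) (e : Fin m ↪o I) :
    evalFinset v x (Finset.univ.map e.toEmbedding) = v (x ∘ e) := by
  have he : (Finset.univ.map e.toEmbedding).card = m := by simp
  rw [evalFinset_of_card_eq he, ← Finset.orderEmbOfFin_unique' he fun i =>
    Finset.mem_map_of_mem e.toEmbedding (Finset.mem_univ i)]

lemma evalFinset_mSum {α I : Type*} [LinearOrder I] {m N : ℕ} {S : Finset I} (hS : S.card = N)
    (v : (Fin m → α) → ℝ) (x : I → α) :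
    evalFinset (mSum N m v) x S = ∑ A ∈ S.powersetCard m, evalFinset v x A := by
  conv_rhs => rw [← S.map_orderEmbOfFin_univ hS, Finset.powersetCard_map, Finset.sum_map]
  rw [evalFinset_of_card_eq hS, mSum]
  refine Finset.sum_congr rfl fun s hs => ?_
  have hcard := (Finset.mem_powersetCard.1 hs).2
  have hmap : Finset.univ.map ((s.orderEmbOfFin hcard).trans (S.orderEmbOfFin hS)).toEmbedding =
      s.map (S.orderEmbOfFin hS).toEmbedding := by
    conv_rhs => rw [← s.map_orderEmbOfFin_univ hcard, Finset.map_map]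
    rfl
  rw [dif_pos hcard]
  exact (hmap ▸ evalFinset_map_univ v x _).symm

lemma glue_comp_castLE {α : Type*} {m n : ℕ} (hmn : m ≤ n) (y : Fin m → α)
    (z : Fin (n - m) → α) : glue hmn y z ∘ Fin.castLE hmn = y := by
  funext i
  exact Fin.append_left y z i

lemma exists_forall_eq_sum_mul_evalFinset_mSum {m N n : ℕ} (hmN : m ≤ N) (hmn : m ≤ n)
    (hn : N + m ≤ n) :
    ∃ c : Finset (Fin n) → ℝ, ∀ {α : Type*} (v : (Fin m → α) → ℝ) (y : Fin m → α)
      (z : Fin (n - m) → α), v y = ∑ S ∈ Finset.univ.powersetCard N,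
        c S * evalFinset (mSum N m v) (glue hmn y z) S := by
  obtain ⟨c, hc⟩ := exists_forall_apply_eq_sum_mul_sum_powersetCard hmN
    (by rwa [Finset.card_fin]) (Finset.subset_univ (Finset.univ.map (Fin.castLEEmb hmn)))
    (by rw [Finset.card_map, Finset.card_fin])
  refine ⟨c, fun v y z => ?_⟩
  have hy : evalFinset v (glue hmn y z) (Finset.univ.map (Fin.castLEEmb hmn)) = v y := by
    rw [show Fin.castLEEmb hmn = (Fin.castLEOrderEmb hmn).toEmbedding from rfl,
      evalFinset_map_univ]
    exact congrArg v (glue_comp_castLE hmn y z)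
  rw [← hy, hc (evalFinset v (glue hmn y z))]
  exact Finset.sum_congr rfl fun S hS => by rw [evalFinset_mSum (Finset.mem_powersetCard.1 hS).2]

lemma mSum_add {α : Type*} {N m : ℕ} (v w : (Fin m → α) → ℝ) :
    mSum N m (v + w) = mSum N m v + mSum N m w := by
  funext x
  rw [Pi.add_apply, mSum, mSum, mSum, ← Finset.sum_add_distrib]
  exact Finset.sum_congr rfl fun s hs => by simp [(Finset.mem_powersetCard.1 hs).2]

lemma mSum_const_smul {α : Type*} {N m : ℕ} (c : ℝ) (v : (Fin m → α) → ℝ) :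
    mSum N m (c • v) = c • mSum N m v := by
  funext x
  rw [Pi.smul_apply, mSum, mSum, Finset.smul_sum]
  exact Finset.sum_congr rfl fun s hs => by simp [(Finset.mem_powersetCard.1 hs).2]

lemma mSum_const {α : Type*} {N m : ℕ} (c : ℝ) (x : Fin N → α) :
    mSum N m (fun _ => c) x = N.choose m * c := by
  rw [mSum, Finset.sum_congr rfl fun s hs => dif_pos (Finset.mem_powersetCard.1 hs).2]
  simp

variable {μ : Measure Λ} {m N : ℕ} {V V' : (Fin N → Λ) → ℝ} {v v' : (Fin m → Λ) → ℝ}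

lemma HasSumStruct.add (hV : HasSumStruct μ N m V v) (hV' : HasSumStruct μ N m V' v') :
    HasSumStruct μ N m (V + V') (v + v') :=
  ⟨fun σ x => congrArg₂ (· + ·) (hV.1 σ x) (hV'.1 σ x), hV.2.1.add hV'.2.1,
    mSum_add (N := N) v v' ▸ hV.2.2.add hV'.2.2⟩

lemma HasSumStruct.const_smul (hV : HasSumStruct μ N m V v) (c : ℝ) :
    HasSumStruct μ N m (c • V) (c • v) :=
  ⟨fun σ x => congrArg (c • ·) (hV.1 σ x), hV.2.1.const_smul c,
    mSum_const_smul (N := N) c v ▸ hV.2.2.const_smul c⟩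

lemma hasSumStruct_const (hmN : m ≤ N) (c : ℝ) :
    HasSumStruct μ N m (fun _ => c) fun _ => c / N.choose m := by
  refine ⟨fun _ _ => rfl, measurable_const, ae_of_all _ fun x => ?_⟩
  rw [mSum_const, mul_div_cancel₀]
  exact Nat.cast_ne_zero.2 (Nat.choose_pos hmN).ne'

lemma HasSumStruct.add_const (hmN : m ≤ N) (hV : HasSumStruct μ N m V v) (c : ℝ) :
    HasSumStruct μ N m (fun x => V x + c) fun y => v y + c / N.choose m :=
  hV.add (hasSumStruct_const hmN c)

variable [SigmaFinite μ]

instance (k : ℕ) : SigmaFinite (pm μ k) := inferInstanceAs (SigmaFinite (Measure.pi fun _ => μ))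

lemma neZero_pm (hμ : μ ≠ 0) (k : ℕ) : NeZero (pm μ k) := by
  refine ⟨fun h => ?_⟩
  rw [← Measure.measure_univ_eq_zero, pm, Measure.pi_univ] at h
  simp [hμ] at h

lemma quasiMeasurePreserving_pi_comp {I J : Type*} [Fintype I] [Fintype J] (j : J ↪ I) :
    Measure.QuasiMeasurePreserving (fun x : I → Λ => x ∘ j)
      (Measure.pi fun _ => μ) (Measure.pi fun _ => μ) := by
  classical
  let : Fintype {i // i ∈ Set.range j} := Subtype.fintype _
  have hsplit := measurePreserving_piEquivPiSubtypeProd (fun _ : I => μ) (· ∈ Set.range j)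
  have hreindex := (measurePreserving_piCongrLeft (fun _ : {i // i ∈ Set.range j} => μ)
    (Equiv.ofInjective j j.injective)).symm
  exact (hreindex.quasiMeasurePreserving.comp Measure.quasiMeasurePreserving_fst).comp
    hsplit.quasiMeasurePreserving

lemma ae_forall_comp_embedding {p : (Fin N → Λ) → Prop} (hp : ∀ᵐ x ∂pm μ N, p x) (n : ℕ) :
    ∀ᵐ x ∂pm μ n, ∀ e : Fin N ↪ Fin n, p (x ∘ e) :=
  ae_all_iff.2 fun e => (quasiMeasurePreserving_pi_comp e).ae hp

lemma measurePreserving_glue (hmN : m ≤ N) :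
    MeasurePreserving (fun q : (Fin m → Λ) × (Fin (N - m) → Λ) => glue hmN q.1 q.2)
      ((pm μ m).prod (pm μ (N - m))) (pm μ N) := by
  let e : Fin m ⊕ Fin (N - m) ≃ Fin N := finSumFinEquiv.trans (finCongr (by omega))
  have hmp := (measurePreserving_piCongrLeft (fun _ : Fin N => μ) e).comp
    (measurePreserving_sumPiEquivProdPi_symm (fun _ : Fin m ⊕ Fin (N - m) => μ))
  have hglue : (fun q : (Fin m → Λ) × (Fin (N - m) → Λ) => glue hmN q.1 q.2) =
      MeasurableEquiv.piCongrLeft (fun _ => Λ) e ∘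
        (MeasurableEquiv.sumPiEquivProdPi fun _ => Λ).symm := by
    funext q i
    obtain ⟨k, rfl⟩ := e.surjective i
    rw [Function.comp_apply, MeasurableEquiv.coe_piCongrLeft, Equiv.piCongrLeft_apply_apply]
    rcases k with k | k <;> simp [glue, e] <;> rfl
  exact hglue ▸ hmp

lemma ae_exists_forall_glue_comp {n : ℕ} (hμ : μ ≠ 0) (hmn : m ≤ n) {p : (Fin N → Λ) → Prop}
    (hp : ∀ᵐ x ∂pm μ N, p x) :
    ∀ᵐ y ∂pm μ m, ∃ z : Fin (n - m) → Λ, ∀ e : Fin N ↪ Fin n, p (glue hmn y z ∘ e) := by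
  have hprod :=
    (measurePreserving_glue hmn).quasiMeasurePreserving.ae (ae_forall_comp_embedding hp n)
  have := neZero_pm hμ (n - m)
  exact (Measure.ae_ae_of_ae_prod hprod).mono fun y hy => hy.exists

lemma HasSumStruct.ae_eq_zero (hμ : μ ≠ 0) (hmN : m ≤ N) (hV : HasSumStruct μ N m V v)
    (hV₀ : V =ᵐ[pm μ N] 0) : v =ᵐ[pm μ m] 0 := by
  obtain ⟨c, hc⟩ := exists_forall_eq_sum_mul_evalFinset_mSum hmN (Nat.le_add_left m N) le_rfl
  filter_upwards [ae_exists_forall_glue_comp hμ (Nat.le_add_left m N) (hV.2.2.symm.trans hV₀)]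
    with y ⟨z, hz⟩
  rw [hc v y z]
  refine Finset.sum_eq_zero fun S hS => ?_
  have hScard := (Finset.mem_powersetCard.1 hS).2
  rw [evalFinset_of_card_eq hScard]
  exact mul_eq_zero_of_right _ (hz (S.orderEmbOfFin hScard).toEmbedding)

lemma HasSumStruct.ae_sub_eq_const (hμ : μ ≠ 0) (hmN : m ≤ N) (hV : HasSumStruct μ N m V v)
    (hV' : HasSumStruct μ N m V' v') {C : ℝ} (hC : ∀ᵐ x ∂pm μ N, V' x - V x = C) :
    ∀ᵐ y ∂pm μ m, v' y - v y = C / N.choose m := by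
  have hdiff := (hV'.add (hV.const_smul (-1))).add_const hmN (-C)
  filter_upwards [hdiff.ae_eq_zero hμ hmN
    (hC.mono fun x hx => by simp [← hx, ← sub_eq_add_neg])] with y hy
  simp only [Pi.add_apply, Pi.smul_apply, Pi.zero_apply, smul_eq_mul, neg_div] at hy
  linarith

lemma ae_exists_tendsto_of_mSum (hμ : μ ≠ 0) (hmN : m ≤ N) {v : ℕ → (Fin m → Λ) → ℝ}
    (hv : ∀ᵐ x ∂pm μ N, ∃ l, Tendsto (fun n => mSum N m (v n) x) atTop (𝓝 l)) :
    ∀ᵐ y ∂pm μ m, ∃ l, Tendsto (fun n => v n y) atTop (𝓝 l) := by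
  obtain ⟨c, hc⟩ := exists_forall_eq_sum_mul_evalFinset_mSum hmN (Nat.le_add_left m N) le_rfl
  filter_upwards [ae_exists_forall_glue_comp hμ (Nat.le_add_left m N) hv] with y ⟨z, hz⟩
  choose l hl using hz
  have heval : ∀ S ∈ Finset.univ.powersetCard N, ∃ l, Tendsto
      (fun n => evalFinset (mSum N m (v n)) (glue (Nat.le_add_left m N) y z) S) atTop (𝓝 l) :=
    fun S hS => by
      simp only [evalFinset_of_card_eq (Finset.mem_powersetCard.1 hS).2]
      exact ⟨_, hl (S.orderEmbOfFin _).toEmbedding⟩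
  choose! l' hl' using heval
  refine ⟨∑ S ∈ Finset.univ.powersetCard N, c S * l' S, ?_⟩
  simp only [fun n => hc (v n) y z]
  exact tendsto_finsetSum _ fun S hS => (hl' S hS).const_mul (c S)

lemma ae_tendsto_mSum {v : ℕ → (Fin m → Λ) → ℝ} {u : (Fin m → Λ) → ℝ}
    (hu : ∀ᵐ y ∂pm μ m, Tendsto (fun n => v n y) atTop (𝓝 (u y))) :
    ∀ᵐ x ∂pm μ N, Tendsto (fun n => mSum N m (v n) x) atTop (𝓝 (mSum N m u x)) := by
  filter_upwards [ae_forall_comp_embedding hu N] with x hx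
  refine tendsto_finsetSum _ fun s hs => ?_
  have hcard := (Finset.mem_powersetCard.1 hs).2
  simp only [dif_pos hcard]
  exact hx (s.orderEmbOfFin hcard).toEmbedding

lemma exists_hasSumStruct_of_tendsto (hμ : μ ≠ 0) (hmN : m ≤ N) {V : ℕ → (Fin N → Λ) → ℝ}
    {U : (Fin N → Λ) → ℝ} (hV : ∀ n, ∃ v : (Fin m → Λ) → ℝ, HasSumStruct μ N m (V n) v)
    (hU : ∀ᵐ x ∂pm μ N, Tendsto (fun n => V n x) atTop (𝓝 (U x))) :
    ∃ u : (Fin m → Λ) → ℝ, HasSumStruct μ N m U u := by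
  choose v hv using hV
  have hmSum : ∀ᵐ x ∂pm μ N, Tendsto (fun n => mSum N m (v n) x) atTop (𝓝 (U x)) := by
    filter_upwards [hU, ae_all_iff.2 fun n => (hv n).2.2] with x hx hxv
    exact hx.congr hxv
  have hlim : ∀ᵐ y ∂pm μ m, Tendsto (fun n => v n y) atTop (𝓝 (limUnder atTop fun n => v n y)) :=
    (ae_exists_tendsto_of_mSum hμ hmN (hmSum.mono fun x hx => ⟨_, hx⟩)).mono
      fun y => tendsto_nhds_limUnder
  refine ⟨fun y => limUnder atTop fun n => v n y, fun σ x => ?_, ?_, ?_⟩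
  · simp only [(hv _).1 σ x]
  · exact (StronglyMeasurable.limUnder fun n => (hv n).2.1.stronglyMeasurable).measurable
  · filter_upwards [hmSum, ae_tendsto_mSum hlim] with x hx hx'
    exact tendsto_nhds_unique hx hx'

end SumStructure

section Maximizers

lemma ofReal_integral_le_lintegral_ofReal {X : Type*} [MeasurableSpace X] {ν : Measure X}
    (f : X → ℝ) : ENNReal.ofReal (∫ x, f x ∂ν) ≤ ∫⁻ x, ENNReal.ofReal (f x) ∂ν := by
  by_cases hf : Integrable f ν
  · rw [integral_eq_lintegral_pos_part_sub_lintegral_neg_part hf]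
    exact (ENNReal.ofReal_le_ofReal (sub_le_self _ ENNReal.toReal_nonneg)).trans
      ENNReal.ofReal_toReal_le
  · simp [integral_undef hf]

lemma measurable_ofReal_exp_neg {X : Type*} [MeasurableSpace X] {W : X → ℝ} (hW : Measurable W) :
    Measurable fun x => ENNReal.ofReal (exp (-W x)) :=
  hW.neg.exp.ennreal_ofReal

lemma llr_withDensity_ae_eq {X : Type*} [MeasurableSpace X] {μ : Measure X} [SigmaFinite μ]
    {P W : X → ℝ} (hP : Measurable P) (hPpos : ∀ᵐ x ∂μ, 0 < P x) (hW : Measurable W) :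
    llr (μ.withDensity fun x => ENNReal.ofReal (P x))
      (μ.withDensity fun x => ENNReal.ofReal (exp (-W x))) =ᵐ[μ] fun x => W x + log (P x) := by
  filter_upwards [Measure.rnDeriv_withDensity_right (μ.withDensity fun x => ENNReal.ofReal (P x)) μ
    (measurable_ofReal_exp_neg hW).aemeasurable
    (ae_of_all _ fun x => (ENNReal.ofReal_pos.2 (exp_pos _)).ne')
    (ae_of_all _ fun x => ENNReal.ofReal_ne_top),
    Measure.rnDeriv_withDensity μ hP.ennreal_ofReal, hPpos] with x hx hxP hxpos
  rw [llr, hx, hxP, ENNReal.toReal_mul, ENNReal.toReal_inv, ENNReal.toReal_ofReal (exp_pos _).le,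
    ENNReal.toReal_ofReal hxpos.le, log_mul (inv_pos.2 (exp_pos _)).ne' hxpos.ne', log_inv, log_exp,
    neg_neg]

variable {μ : Measure Λ} {N m : ℕ} {P W V : (Fin N → Λ) → ℝ}

lemma pm_absolutelyContinuous_Pmeas (hP : Measurable P) (hPpos : ∀ᵐ x ∂pm μ N, 0 < P x) :
    pm μ N ≪ Pmeas μ N P :=
  withDensity_absolutelyContinuous' hP.ennreal_ofReal.aemeasurable
    (hPpos.mono fun _ hx => (ENNReal.ofReal_pos.2 hx).ne')

lemma pm_absolutelyContinuous_Wmeas (hW : Measurable W) : pm μ N ≪ Wmeas μ N W :=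
  withDensity_absolutelyContinuous' (measurable_ofReal_exp_neg hW).aemeasurable
    (ae_of_all _ fun _ => (ENNReal.ofReal_pos.2 (exp_pos _)).ne')

lemma Zfun_eq_partitionFunction (hW : Measurable W)
    (hV : Integrable (fun x => exp (-V x)) (Wmeas μ N W)) :
    Zfun μ N W V = partitionFunction (Wmeas μ N W) V := by
  rw [partitionFunction, integral_eq_lintegral_of_nonneg_ae (ae_of_all _ fun x => (exp_pos _).le)
    hV.1, Wmeas, lintegral_withDensity_eq_lintegral_mul₀'
      (measurable_ofReal_exp_neg hW).aemeasurable hV.1.aemeasurable.ennreal_ofReal, Zfun, ZE]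
  congr 1
  refine lintegral_congr fun x => ?_
  rw [Pi.mul_apply, ← ENNReal.ofReal_mul (exp_pos _).le, ← exp_add, neg_add_eq_sub]

lemma FP_eq_exp_neg_crossEntropy [NeZero (Wmeas μ N W)] (hW : Measurable W)
    (hV : Integrable (fun x => exp (-V x)) (Wmeas μ N W)) :
    FP μ N P W V = exp (-crossEntropy (Pmeas μ N P) (Wmeas μ N W) V) := by
  rw [FP, Zfun_eq_partitionFunction hW hV, crossEntropy, neg_add, ← sub_eq_add_neg, exp_sub,
    exp_log (partitionFunction_pos hV)]

lemma isMinOn_crossEntropy_iff_forall_FP_le [NeZero (Wmeas μ N W)] (hW : Measurable W)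
    {D : Set ((Fin N → Λ) → ℝ)} (hD : IsPotentialClass (Wmeas μ N W) D) (hV : V ∈ D) :
    IsMinOn (crossEntropy (Pmeas μ N P) (Wmeas μ N W)) D V ↔
      ∀ V' ∈ D, FP μ N P W V' ≤ FP μ N P W V := by
  refine isMinOn_iff.trans (forall₂_congr fun V' hV' => ?_)
  rw [FP_eq_exp_neg_crossEntropy hW (hD.integrable_exp_neg V hV),
    FP_eq_exp_neg_crossEntropy hW (hD.integrable_exp_neg V' hV'), exp_le_exp, neg_le_neg_iff]

lemma isPotentialClass_memVP [IsFiniteMeasure (Pmeas μ N P)] (hmN : m ≤ N) :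
    IsPotentialClass (Wmeas μ N W) {V | memVP μ N m P W V} where
  integrable_exp_neg _ hV := hV.2.1
  add_const := by
    rintro V ⟨hVP, hVW, v, hv⟩ c
    exact ⟨hVP.add (integrable_const c), integrable_exp_neg_add_const hVW c, _,
      hv.add_const hmN c⟩
  convex := by
    rintro V ⟨hVP, hVW, v, hv⟩ V' ⟨hVP', hVW', v', hv'⟩ a b ha hb hab
    exact ⟨(hVP.smul a).add (hVP'.smul b), convex_setOf_integrable_exp_neg hVW hVW' ha hb hab, _,
      (hv.const_smul a).add (hv'.const_smul b)⟩

variable [SigmaFinite μ]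

lemma lintegral_ofReal_rho_le (hmN : m ≤ N) (hP : Measurable P) :
    ∫⁻ y, ENNReal.ofReal (rho μ N m hmN P y) ∂pm μ m ≤ ∫⁻ x, ENNReal.ofReal (P x) ∂pm μ N := by
  have hglue := measurePreserving_glue (μ := μ) hmN
  calc ∫⁻ y, ENNReal.ofReal (rho μ N m hmN P y) ∂pm μ m
      ≤ ∫⁻ y, ∫⁻ z, ENNReal.ofReal (P (glue hmN y z)) ∂pm μ (N - m) ∂pm μ m :=
        lintegral_mono fun y => ofReal_integral_le_lintegral_ofReal _
    _ = ∫⁻ q, ENNReal.ofReal (P (glue hmN q.1 q.2)) ∂(pm μ m).prod (pm μ (N - m)) :=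
        (lintegral_prod _ (hP.comp hglue.measurable).ennreal_ofReal.aemeasurable).symm
    _ = ∫⁻ x, ENNReal.ofReal (P x) ∂pm μ N := hglue.lintegral_comp hP.ennreal_ofReal

lemma isFiniteMeasure_rhomeas [IsFiniteMeasure (Pmeas μ N P)] (hmN : m ≤ N) (hP : Measurable P) :
    IsFiniteMeasure (rhomeas μ N m hmN P) := by
  refine isFiniteMeasure_withDensity ((lintegral_ofReal_rho_le hmN hP).trans_lt ?_).ne
  rw [← setLIntegral_univ, ← withDensity_apply _ MeasurableSet.univ]
  exact measure_lt_top (Pmeas μ N P) _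

lemma isPotentialClass_memVrho [IsFiniteMeasure (Pmeas μ N P)] (hmN : m ≤ N)
    (hP : Measurable P) :
    IsPotentialClass (Wmeas μ N W) {V | memVrho μ N m hmN P W V} where
  integrable_exp_neg _ hV := hV.1
  add_const := by
    have := isFiniteMeasure_rhomeas (μ := μ) hmN hP
    rintro V ⟨hVW, v, hv, hvρ⟩ c
    exact ⟨integrable_exp_neg_add_const hVW c, _, hv.add_const hmN c,
      hvρ.add (integrable_const _)⟩
  convex := by
    rintro V ⟨hVW, v, hv, hvρ⟩ V' ⟨hVW', v', hv', hvρ'⟩ a b ha hb hab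
    exact ⟨convex_setOf_integrable_exp_neg hVW hVW' ha hb hab, _,
      (hv.const_smul a).add (hv'.const_smul b), (hvρ.smul a).add (hvρ'.smul b)⟩

lemma neZero_Wmeas (hμ : μ ≠ 0) (hW : Measurable W) : NeZero (Wmeas μ N W) :=
  ⟨fun h => (neZero_pm hμ N).out
    (Measure.absolutelyContinuous_zero_iff.1 (h ▸ pm_absolutelyContinuous_Wmeas hW))⟩

theorem exists_memVP_forall_FP_le [IsProbabilityMeasure (Pmeas μ N P)] (hμ : μ ≠ 0) (hmN : m ≤ N)
    (hP : Measurable P) (hPpos : ∀ᵐ x ∂pm μ N, 0 < P x) (hW : Measurable W)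
    (hWlogP : Integrable (fun x => max (W x + log (P x)) 0) (Pmeas μ N P))
    (hne : ∃ V, memVP μ N m P W V) :
    ∃ U, memVP μ N m P W U ∧ ∀ V, memVP μ N m P W V → FP μ N P W V ≤ FP μ N P W U := by
  have := neZero_Wmeas (N := N) hμ hW
  have hPm : Pmeas μ N P ≪ pm μ N := withDensity_absolutelyContinuous _ _
  have hWm : Wmeas μ N W ≪ pm μ N := withDensity_absolutelyContinuous _ _
  have hmP := pm_absolutelyContinuous_Pmeas hP hPpos
  have hD : IsPotentialClass (Wmeas μ N W) {V | memVP μ N m P W V} := isPotentialClass_memVP hmN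
  have hllr : llr (Pmeas μ N P) (Wmeas μ N W) =ᵐ[Pmeas μ N P] fun x => W x + log (P x) :=
    hPm.ae_eq (llr_withDensity_ae_eq hP hPpos hW)
  have : SigmaFinite (Wmeas μ N W) := SigmaFinite.withDensity_ofReal _
  obtain ⟨U, hU, hmin⟩ := hD.exists_isMinOn_crossEntropy
    (hPm.trans (pm_absolutelyContinuous_Wmeas hW)) (hWm.trans hmP) hne (fun V hV => hV.1)
    (hWlogP.congr (hllr.mono fun x hx => by simp only [hx]))
    fun V U hV hlim hUP hUW => ⟨hUP, hUW,
      exists_hasSumStruct_of_tendsto hμ hmN (fun n => (hV n).2.2) (hmP.ae_le hlim)⟩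
  exact ⟨U, hU, (isMinOn_crossEntropy_iff_forall_FP_le hW hD hU).1 hmin⟩

theorem exists_const_of_forall_FP_le [IsProbabilityMeasure (Pmeas μ N P)] (hμ : μ ≠ 0)
    (hmN : m ≤ N) (hW : Measurable W) {D : Set ((Fin N → Λ) → ℝ)}
    (hD : IsPotentialClass (Wmeas μ N W) D) {U₀ U₁ : (Fin N → Λ) → ℝ} {u₀ u₁ : (Fin m → Λ) → ℝ}
    (hU₀ : U₀ ∈ D) (hU₁ : U₁ ∈ D) (hu₀ : HasSumStruct μ N m U₀ u₀)
    (hu₁ : HasSumStruct μ N m U₁ u₁) (hmax₀ : ∀ V ∈ D, FP μ N P W V ≤ FP μ N P W U₀)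
    (hmax₁ : ∀ V ∈ D, FP μ N P W V ≤ FP μ N P W U₁) :
    ∃ C : ℝ, (fun x => U₁ x - U₀ x) =ᵐ[pm μ N] (fun _ => C) ∧
      (fun y => u₁ y - u₀ y) =ᵐ[pm μ m] (fun _ => C / (N.choose m : ℝ)) := by
  have := neZero_Wmeas (N := N) hμ hW
  obtain ⟨C, hC⟩ := hD.ae_sub_eq_const_of_isMinOn hU₀ hU₁
    ((isMinOn_crossEntropy_iff_forall_FP_le hW hD hU₀).2 hmax₀)
    ((isMinOn_crossEntropy_iff_forall_FP_le hW hD hU₁).2 hmax₁)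
  have hCm := (pm_absolutelyContinuous_Wmeas hW).ae_le hC
  exact ⟨C, hCm, hu₀.ae_sub_eq_const hμ hmN hu₁ hCm⟩

end Maximizers

/-- If `(W + log P)₊ ∈ L¹(Λ^N; P d^N x)` and `V_P ≠ ∅`, then `F_P`
attains its maximum on `V_P` at some `U` with `m`-sum structure and generator `u`.
Moreover any two maximizers of `F_P` on `V_P` (or on `V_{ρ^{(m)}}`, if maximizers on
`V_{ρ^{(m)}}` exist) differ a.e. by a real constant `C`, and their generators differ
a.e. by `C / C(N,m)`. -/
theorem statement10 (μ : Measure Λ) [SigmaFinite μ] (hμ : μ ≠ 0)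
    (N m : ℕ) (hN : 2 ≤ N) (hm : 1 ≤ m) (hmN : m ≤ N)
    (P W : (Fin N → Λ) → ℝ) (hPmeas : Measurable P)
    (hPprob : ∫⁻ x, ENNReal.ofReal (P x) ∂(pm μ N) = 1)
    (hPpos : ∀ᵐ x ∂(pm μ N), 0 < P x)
    (hWmeas : Measurable W)
    (hWlogP : Integrable (fun x => max (W x + Real.log (P x)) 0) (Pmeas μ N P))
    (hne : ∃ V, memVP μ N m P W V) :
    (∃ U u, HasSumStruct μ N m U u ∧ memVP μ N m P W U ∧
        ∀ V, memVP μ N m P W V → FP μ N P W V ≤ FP μ N P W U) ∧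
    (∀ U₀ U₁ u₀ u₁, memVP μ N m P W U₀ → memVP μ N m P W U₁ →
        HasSumStruct μ N m U₀ u₀ → HasSumStruct μ N m U₁ u₁ →
        (∀ V, memVP μ N m P W V → FP μ N P W V ≤ FP μ N P W U₀) →
        (∀ V, memVP μ N m P W V → FP μ N P W V ≤ FP μ N P W U₁) →
        ∃ C : ℝ, (fun x => U₁ x - U₀ x) =ᵐ[pm μ N] (fun _ => C) ∧
          (fun y => u₁ y - u₀ y) =ᵐ[pm μ m] (fun _ => C / (N.choose m : ℝ))) ∧
    (∀ U₀ U₁ u₀ u₁, memVrho μ N m hmN P W U₀ → memVrho μ N m hmN P W U₁ →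
        HasSumStruct μ N m U₀ u₀ → HasSumStruct μ N m U₁ u₁ →
        (∀ V, memVrho μ N m hmN P W V → FP μ N P W V ≤ FP μ N P W U₀) →
        (∀ V, memVrho μ N m hmN P W V → FP μ N P W V ≤ FP μ N P W U₁) →
        ∃ C : ℝ, (fun x => U₁ x - U₀ x) =ᵐ[pm μ N] (fun _ => C) ∧
          (fun y => u₁ y - u₀ y) =ᵐ[pm μ m] (fun _ => C / (N.choose m : ℝ))) := by
  have : IsProbabilityMeasure (Pmeas μ N P) :=
    ⟨by rw [Pmeas, withDensity_apply _ MeasurableSet.univ, Measure.restrict_univ, hPprob]⟩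
  refine ⟨?_, ?_, ?_⟩
  · obtain ⟨U, hU, hmax⟩ := exists_memVP_forall_FP_le hμ hmN hPmeas hPpos hWmeas hWlogP hne
    obtain ⟨u, hu⟩ := hU.2.2
    exact ⟨U, u, hu, hU, hmax⟩
  · intro U₀ U₁ u₀ u₁
    exact exists_const_of_forall_FP_le hμ hmN hWmeas (isPotentialClass_memVP hmN)
  · intro U₀ U₁ u₀ u₁
    exact exists_const_of_forall_FP_le hμ hmN hWmeas (isPotentialClass_memVrho hmN hPmeas)

end
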